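/- Let n ≥ 1, let E = EuclideanSpace ℝ (Fin n), and let σ denote the canonical surface measure on the unit sphere S = {ω ∈ E : ‖ω‖ = 1}. Let f : E → ℝ be C^∞, and let Δ denote the (analyst's) Laplacian on E, i.e. the sum of the pure second directional derivatives along an orthonormal basis. Then the radialization commutes with the Laplacian: for every x ∈ E, Δ(Af)(x) = (A(Δf))(x), where (Ag)(x) = ⨍_S g(‖x‖ • ω) dσ(ω) for any function g. -/

import Mathlib

open MeasureTheory

/-- The analyst's Laplacian on `EuclideanSpace ℝ (Fin n)`: the sum of the pure second
directional derivatives along the standard orthonormal basis. -/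
noncomputable def laplacian {n : ℕ} (f : EuclideanSpace ℝ (Fin n) → ℝ)
    (x : EuclideanSpace ℝ (Fin n)) : ℝ :=
  ∑ i : Fin n, iteratedFDeriv ℝ 2 f x
    ![EuclideanSpace.single i (1 : ℝ), EuclideanSpace.single i (1 : ℝ)]

/-- The radialization operator: `(Ag)(x)` is the average of `g` over the sphere of radius `‖x‖`
centered at the origin, with respect to the canonical surface measure on the unit sphere. -/
noncomputable def radialization {n : ℕ} (g : EuclideanSpace ℝ (Fin n) → ℝ)
    (x : EuclideanSpace ℝ (Fin n)) : ℝ :=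
  ⨍ ω : Metric.sphere (0 : EuclideanSpace ℝ (Fin n)) 1,
    g (‖x‖ • (ω : EuclideanSpace ℝ (Fin n)))
    ∂((volume : Measure (EuclideanSpace ℝ (Fin n))).toSphere)

/-!
A spherical mean is a mean over the orthogonal group: since this group is transitive on spheres
and preserves the surface measure, Fubini's theorem turns the average of `f` over the sphere of
radius `‖x‖` into `∫ f (u x) dμ(u)`, where `μ` is a right-invariant probability measure on the
group. The integrand now depends smoothly on `x`, with no trace of the norm, so the Laplacian passes
under the integral sign, and `Δ (f ∘ u) = Δ f ∘ u` because the Laplacian is invariant under linear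
isometries.
-/

open Function Metric Module Set Topology
open scoped Laplacian Pointwise

section JointlySmooth

variable {𝕜 P H F : Type*} [NontriviallyNormedField 𝕜] [NormedAddCommGroup P] [NormedSpace 𝕜 P]
  [NormedAddCommGroup H] [NormedSpace 𝕜 H] [NormedAddCommGroup F] [NormedSpace 𝕜 F] {φ : P → H → F}

theorem contDiff_uncurry_fderiv {m n : WithTop ℕ∞} (hφ : ContDiff 𝕜 n (uncurry φ))
    (hmn : m + 1 ≤ n) : ContDiff 𝕜 m (uncurry fun p x ↦ fderiv 𝕜 (φ p) x) :=
  ContDiff.fderiv (f := fun q : P × H ↦ φ q.1) (by fun_prop) contDiff_snd hmn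

theorem continuous_uncurry_fderiv (hφ : ContDiff 𝕜 1 (uncurry φ)) :
    Continuous (uncurry fun p x ↦ fderiv 𝕜 (φ p) x) :=
  (contDiff_uncurry_fderiv (m := 0) hφ le_rfl).continuous

theorem continuous_uncurry_fderiv_fderiv (hφ : ContDiff 𝕜 2 (uncurry φ)) :
    Continuous (uncurry fun p x ↦ fderiv 𝕜 (fderiv 𝕜 (φ p)) x) :=
  continuous_uncurry_fderiv (contDiff_uncurry_fderiv hφ one_add_one_eq_two.le)

end JointlySmooth

section ParametricIntegral

variable {K : Type*} [TopologicalSpace K] [CompactSpace K] [MeasurableSpace K]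
  [OpensMeasurableSpace K] {μ : Measure K} [IsFiniteMeasureOnCompacts μ]

theorem integrable_of_continuous_of_compactSpace {F : Type*} [NormedAddCommGroup F] {g : K → F}
    (hg : Continuous g) : Integrable g μ :=
  hg.integrable_of_hasCompactSupport (.of_compactSpace g)

section FDeriv

variable {𝕜 H F : Type*} [RCLike 𝕜] [NormedAddCommGroup H] [NormedSpace 𝕜 H]
  [NormedAddCommGroup F] [NormedSpace ℝ F] [NormedSpace 𝕜 F]

theorem hasFDerivAt_integral_of_continuous_fderiv {φ : K → H → F}
    (hφ : ∀ x, Continuous (φ · x)) (hφ_diff : ∀ k, Differentiable 𝕜 (φ k))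
    (hφ_fderiv : Continuous fun q : K × H ↦ fderiv 𝕜 (φ q.1) q.2) (x : H) :
    HasFDerivAt (fun y ↦ ∫ k, φ k y ∂μ) (∫ k, fderiv 𝕜 (φ k) x ∂μ) x := by
  have hφ_fderiv_left (y : H) : Continuous fun k ↦ fderiv 𝕜 (φ k) y :=
    hφ_fderiv.comp (.prodMk_left y)
  obtain ⟨C, hC⟩ := isCompact_univ.exists_bound_of_continuousOn (hφ_fderiv_left x).continuousOn
  have hbound : ∀ᶠ y in 𝓝 x, ∀ k ∈ univ, ‖fderiv 𝕜 (φ k) y‖ < C + 1 :=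
    isCompact_univ.eventually_forall_of_forall_eventually fun k hk ↦
      (hφ_fderiv.comp continuous_swap).norm.continuousAt.eventually_lt_const
        ((hC k hk).trans_lt (lt_add_one C))
  exact hasFDerivAt_integral_of_dominated_of_fderiv_le hbound
    (.of_forall fun y ↦ (hφ y).aestronglyMeasurable_of_compactSpace)
    (integrable_of_continuous_of_compactSpace (hφ x))
    (hφ_fderiv_left x).aestronglyMeasurable_of_compactSpace
    (.of_forall fun k _ hy ↦ (hy k (mem_univ k)).le)
    (integrable_of_continuous_of_compactSpace continuous_const)
    (.of_forall fun k y _ ↦ (hφ_diff k y).hasFDerivAt)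

theorem fderiv_integral_of_contDiff {P : Type*} [NormedAddCommGroup P] [NormedSpace 𝕜 P]
    {φ : P → H → F} {p : K → P} (hφ : ContDiff 𝕜 1 (uncurry φ)) (hp : Continuous p) :
    fderiv 𝕜 (fun x ↦ ∫ k, φ (p k) x ∂μ) = fun x ↦ ∫ k, fderiv 𝕜 (φ (p k)) x ∂μ := by
  ext1 x
  exact (hasFDerivAt_integral_of_continuous_fderiv
    (fun y ↦ hφ.continuous.comp (hp.prodMk continuous_const))
    (fun k ↦ (hφ.comp (contDiff_prodMk_right (p k))).differentiable one_ne_zero)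
    ((continuous_uncurry_fderiv hφ).comp (hp.prodMap continuous_id)) x).fderiv

theorem iteratedFDeriv_two_integral_of_contDiff {P : Type*} [NormedAddCommGroup P]
    [NormedSpace 𝕜 P] {φ : P → H → F} {p : K → P} (hφ : ContDiff 𝕜 2 (uncurry φ))
    (hp : Continuous p) (x : H) (v : Fin 2 → H) :
    iteratedFDeriv 𝕜 2 (fun y ↦ ∫ k, φ (p k) y ∂μ) x v =
      ∫ k, iteratedFDeriv 𝕜 2 (φ (p k)) x v ∂μ := by
  have hφ₁ : ContDiff 𝕜 1 (uncurry fun q y ↦ fderiv 𝕜 (φ q) y) :=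
    contDiff_uncurry_fderiv hφ one_add_one_eq_two.le
  have hφ₂ : Continuous fun k ↦ fderiv 𝕜 (fderiv 𝕜 (φ (p k))) x :=
    (continuous_uncurry_fderiv_fderiv hφ).comp (hp.prodMk continuous_const)
  simp only [iteratedFDeriv_two_apply]
  rw [fderiv_integral_of_contDiff (hφ.of_le one_le_two) hp, fderiv_integral_of_contDiff hφ₁ hp,
    ContinuousLinearMap.integral_apply (integrable_of_continuous_of_compactSpace hφ₂),
    ContinuousLinearMap.integral_apply
      (integrable_of_continuous_of_compactSpace (hφ₂.clm_apply continuous_const))]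

end FDeriv

theorem laplacian_integral_of_contDiff {P E F : Type*} [NormedAddCommGroup P] [NormedSpace ℝ P]
    [NormedAddCommGroup E] [InnerProductSpace ℝ E] [FiniteDimensional ℝ E]
    [NormedAddCommGroup F] [NormedSpace ℝ F] {φ : P → E → F} {p : K → P}
    (hφ : ContDiff ℝ 2 (uncurry φ)) (hp : Continuous p) (x : E) :
    Δ (fun y ↦ ∫ k, φ (p k) y ∂μ) x = ∫ k, Δ (φ (p k)) x ∂μ := by
  have hcont (v : Fin 2 → E) : Continuous fun k ↦ iteratedFDeriv ℝ 2 (φ (p k)) x v := by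
    simp only [iteratedFDeriv_two_apply]
    exact (((continuous_uncurry_fderiv_fderiv hφ).comp (hp.prodMk continuous_const)).clm_apply
      continuous_const).clm_apply continuous_const
  simp only [InnerProductSpace.laplacian_eq_iteratedFDeriv_stdOrthonormalBasis,
    iteratedFDeriv_two_integral_of_contDiff hφ hp]
  exact (integral_finsetSum _ fun i _ ↦ integrable_of_continuous_of_compactSpace (hcont _)).symm

end ParametricIntegral

section Laplacian

variable {E F : Type*} [NormedAddCommGroup E] [InnerProductSpace ℝ E] [FiniteDimensional ℝ E]
  [NormedAddCommGroup F] [NormedSpace ℝ F]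

theorem continuous_laplacian {f : E → F} (hf : ContDiff ℝ 2 f) : Continuous (Δ f) := by
  have : Continuous (iteratedFDeriv ℝ 2 f) := hf.continuous_iteratedFDeriv le_rfl
  rw [InnerProductSpace.laplacian_eq_iteratedFDeriv_stdOrthonormalBasis]
  fun_prop

theorem laplacian_comp_linearIsometryEquiv {E' : Type*} [NormedAddCommGroup E']
    [InnerProductSpace ℝ E'] [FiniteDimensional ℝ E'] (e : E ≃ₗᵢ[ℝ] E') (f : E' → F) :
    Δ (f ∘ e) = Δ f ∘ e := by
  let b := stdOrthonormalBasis ℝ E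
  ext x
  have hcomp : iteratedFDeriv ℝ 2 (f ∘ e) x =
      (iteratedFDeriv ℝ 2 f (e x)).compContinuousLinearMap
        fun _ ↦ (e.toContinuousLinearEquiv : E →L[ℝ] E') := by
    simpa only [iteratedFDerivWithin_univ, preimage_univ] using!
      e.toContinuousLinearEquiv.iteratedFDerivWithin_comp_right f uniqueDiffOn_univ (mem_univ _) 2
  simp only [comp_apply, InnerProductSpace.laplacian_eq_iteratedFDeriv_orthonormalBasis _ b,
    InnerProductSpace.laplacian_eq_iteratedFDeriv_orthonormalBasis _ (b.map e), hcomp,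
    ContinuousMultilinearMap.compContinuousLinearMap_apply]
  refine Finset.sum_congr rfl fun i _ ↦ congrArg _ ?_
  ext j : 1
  fin_cases j <;> rfl

end Laplacian

section Sphere

variable {E E' : Type*} [NormedAddCommGroup E] [NormedSpace ℝ E] [NormedAddCommGroup E']
  [NormedSpace ℝ E']

/-- The restriction of a linear isometry to the spheres of radius `r` centered at the origin. -/
def sphereHomeomorph (e : E ≃ₗᵢ[ℝ] E') (r : ℝ) : sphere (0 : E) r ≃ₜ sphere (0 : E') r :=
  e.toHomeomorph.subtype fun x ↦ by simp

theorem coe_sphereHomeomorph_apply (e : E ≃ₗᵢ[ℝ] E') {r : ℝ} (ω : sphere (0 : E) r) :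
    (sphereHomeomorph e r ω : E') = e ω :=
  rfl

theorem image_smul_preimage_sphereHomeomorph (e : E ≃ₗᵢ[ℝ] E') {r : ℝ} (I : Set ℝ)
    (s : Set (sphere (0 : E') r)) :
    e '' (I • (Subtype.val '' (sphereHomeomorph e r ⁻¹' s))) = I • (Subtype.val '' s) := by
  calc
    e '' (I • (Subtype.val '' (sphereHomeomorph e r ⁻¹' s)))
      = I • e '' (Subtype.val '' (sphereHomeomorph e r ⁻¹' s)) :=
        image_image2_distrib_right e.map_smul
    _ = I • Subtype.val '' (sphereHomeomorph e r '' (sphereHomeomorph e r ⁻¹' s)) := by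
        simp only [image_image, coe_sphereHomeomorph_apply]
    _ = I • (Subtype.val '' s) := by rw [(sphereHomeomorph e r).image_preimage]

theorem measurePreserving_sphereHomeomorph [MeasurableSpace E] [BorelSpace E] [MeasurableSpace E']
    [BorelSpace E'] {μ : Measure E} {ν : Measure E'} (e : E ≃ₗᵢ[ℝ] E')
    (he : MeasurePreserving e μ ν) :
    MeasurePreserving (sphereHomeomorph e 1) μ.toSphere ν.toSphere := by
  have hmeas : Measurable (sphereHomeomorph e 1) := (sphereHomeomorph e 1).measurable
  refine ⟨hmeas, Measure.ext fun s hs ↦ ?_⟩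
  have hcone : ν (Ioo (0 : ℝ) 1 • (Subtype.val '' s)) =
      μ (Ioo (0 : ℝ) 1 • (Subtype.val '' (sphereHomeomorph e 1 ⁻¹' s))) := by
    rw [← image_smul_preimage_sphereHomeomorph e,
      ← he.measure_preimage_emb e.toHomeomorph.measurableEmbedding, preimage_image_eq _ e.injective]
  rw [Measure.map_apply hmeas hs, Measure.toSphere_apply' _ (hmeas hs),
    Measure.toSphere_apply' _ hs, hcone, e.toLinearEquiv.finrank_eq]

end Sphere

instance instCompactSpaceUnitary {A : Type*} [NormedRing A] [StarRing A] [CStarRing A]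
    [ProperSpace A] : CompactSpace (unitary A) := by
  have hclosed : IsClosed (unitary A : Set A) := isClosed_unitary
  nontriviality A
  exact isCompact_iff_compactSpace.mp <| (isCompact_closedBall 0 1).of_isClosed_subset
    hclosed fun u hu ↦ mem_closedBall_zero_iff.mpr (CStarRing.norm_of_mem_unitary hu).le

theorem exists_isMulRightInvariant_isProbabilityMeasure (G : Type*) [Group G] [TopologicalSpace G]
    [IsTopologicalGroup G] [CompactSpace G] [MeasurableSpace G] [BorelSpace G] :
    ∃ μ : Measure G, μ.IsMulRightInvariant ∧ IsProbabilityMeasure μ := by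
  let ν : Measure G := .haarMeasure ⊤
  have hν : IsProbabilityMeasure ν := ⟨Measure.haarMeasure_self⟩
  exact ⟨ν.inv, inferInstance, Measure.isProbabilityMeasure_map measurable_inv.aemeasurable⟩

section UnitaryMean

variable {E F : Type*} [NormedAddCommGroup E] [InnerProductSpace ℝ E] [NormedAddCommGroup F]
  [NormedSpace ℝ F]

theorem exists_unitary_apply_eq [CompleteSpace E] {x y : E} (h : ‖x‖ = ‖y‖) :
    ∃ u : unitary (E →L[ℝ] E), u.1 x = y :=
  ⟨Unitary.linearIsometryEquiv.symm (Submodule.reflection (ℝ ∙ (x - y))ᗮ), by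
    simpa using Submodule.reflection_sub h⟩

theorem integral_unitary_eq_of_norm_eq [CompleteSpace E]
    [MeasurableSpace (unitary (E →L[ℝ] E))] [BorelSpace (unitary (E →L[ℝ] E))]
    (μ : Measure (unitary (E →L[ℝ] E))) [μ.IsMulRightInvariant] (g : E → F) {x y : E}
    (h : ‖x‖ = ‖y‖) : ∫ u, g (u.1 x) ∂μ = ∫ u, g (u.1 y) ∂μ := by
  obtain ⟨v, rfl⟩ := exists_unitary_apply_eq h
  exact (integral_mul_right_eq_self (μ := μ) (fun u ↦ g (u.1 x)) v).symm

theorem laplacian_integral_unitary [FiniteDimensional ℝ E]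
    [MeasurableSpace (unitary (E →L[ℝ] E))] [BorelSpace (unitary (E →L[ℝ] E))]
    (μ : Measure (unitary (E →L[ℝ] E))) [IsFiniteMeasureOnCompacts μ] {f : E → F}
    (hf : ContDiff ℝ 2 f) (x : E) :
    Δ (fun y ↦ ∫ u, f (u.1 y) ∂μ) x = ∫ u, Δ f (u.1 x) ∂μ := by
  have hcomp (u : unitary (E →L[ℝ] E)) : Δ (fun y ↦ f (u.1 y)) = fun y ↦ Δ f (u.1 y) :=
    laplacian_comp_linearIsometryEquiv (Unitary.linearIsometryEquiv u) f
  have hsmooth : ContDiff ℝ 2 (uncurry fun (T : E →L[ℝ] E) y ↦ f (T y)) :=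
    hf.comp (contDiff_fst.clm_apply contDiff_snd)
  simpa only [hcomp] using
    laplacian_integral_of_contDiff (μ := μ) hsmooth continuous_subtype_val x

end UnitaryMean

section SphericalMean

variable {E F : Type*} [NormedAddCommGroup E] [InnerProductSpace ℝ E] [FiniteDimensional ℝ E]
  [MeasurableSpace E] [BorelSpace E] [NormedAddCommGroup F] [NormedSpace ℝ F]

/-- The radialization of `g`: its average over the sphere through `x` centered at the origin. That
sphere is parametrized by the unit sphere so that the point `x = 0` needs no separate case. -/
noncomputable def sphericalMean (g : E → F) (x : E) : F :=
  ⨍ ω : sphere (0 : E) 1, g (‖x‖ • (ω : E)) ∂(volume : Measure E).toSphere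

theorem sphericalMean_comp_linearIsometryEquiv (e : E ≃ₗᵢ[ℝ] E) (g : E → F) :
    sphericalMean (g ∘ e) = sphericalMean g := by
  have he := measurePreserving_sphereHomeomorph e e.measurePreserving
  ext x
  simpa only [sphericalMean, average_eq, comp_apply, map_smul, coe_sphereHomeomorph_apply] using
    congrArg _ (he.integral_comp (sphereHomeomorph e 1).measurableEmbedding fun ω ↦ g (‖x‖ • ω))

theorem sphericalMean_eq_integral_unitary [Nontrivial E] [CompleteSpace F]
    [MeasurableSpace (unitary (E →L[ℝ] E))] [BorelSpace (unitary (E →L[ℝ] E))]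
    (μ : Measure (unitary (E →L[ℝ] E))) [μ.IsMulRightInvariant] [IsProbabilityMeasure μ]
    {g : E → F} (hg : Continuous g) (x : E) :
    sphericalMean g x = ∫ u, g (u.1 x) ∂μ := by
  have : NeZero (volume : Measure E).toSphere := ⟨Measure.toSphere_ne_zero _⟩
  have hcont : Continuous (uncurry fun (u : unitary (E →L[ℝ] E)) (ω : sphere (0 : E) 1) ↦
      g (u.1 (‖x‖ • (ω : E)))) := by
    simp only [uncurry_def]
    fun_prop
  calc
    sphericalMean g x = ∫ u : unitary (E →L[ℝ] E), sphericalMean (fun y ↦ g (u.1 y)) x ∂μ := by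
      have hrot (u : unitary (E →L[ℝ] E)) : sphericalMean (fun y ↦ g (u.1 y)) = sphericalMean g :=
        sphericalMean_comp_linearIsometryEquiv (Unitary.linearIsometryEquiv u) g
      simp [hrot]
    _ = ⨍ ω : sphere (0 : E) 1, ∫ u, g (u.1 (‖x‖ • (ω : E))) ∂μ ∂(volume : Measure E).toSphere :=
      integral_integral_swap_of_hasCompactSupport hcont (.of_compactSpace _)
    _ = ⨍ _ : sphere (0 : E) 1, ∫ u, g (u.1 x) ∂μ ∂(volume : Measure E).toSphere := by
      congr with ω
      exact integral_unitary_eq_of_norm_eq μ g (by simp [norm_smul])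
    _ = ∫ u, g (u.1 x) ∂μ := average_const _ _

theorem laplacian_radialization_comm_general [Nontrivial E] [CompleteSpace F] {f : E → F}
    (hf : ContDiff ℝ 2 f) : Δ (sphericalMean f) = sphericalMean (Δ f) := by
  borelize ↥(unitary (E →L[ℝ] E))
  obtain ⟨μ, _, _⟩ := exists_isMulRightInvariant_isProbabilityMeasure (unitary (E →L[ℝ] E))
  have hmean {g : E → F} (hg : Continuous g) : sphericalMean g = fun x ↦ ∫ u, g (u.1 x) ∂μ :=
    funext (sphericalMean_eq_integral_unitary μ hg)
  rw [hmean hf.continuous, hmean (continuous_laplacian hf)]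
  exact funext (laplacian_integral_unitary μ hf)

end SphericalMean

theorem laplacian_eq_innerProductSpace_laplacian {n : ℕ} (f : EuclideanSpace ℝ (Fin n) → ℝ) :
    laplacian f = Δ f := by
  rw [InnerProductSpace.laplacian_eq_iteratedFDeriv_orthonormalBasis f
    (EuclideanSpace.basisFun (Fin n) ℝ)]
  simp [funext_iff, laplacian]

theorem radialization_eq_sphericalMean {n : ℕ} (g : EuclideanSpace ℝ (Fin n) → ℝ) :
    radialization g = sphericalMean g :=
  rfl

/-- **Radialization commutes with the Laplacian (Euclidean ball case).** For a `C^∞` function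
`f` on `EuclideanSpace ℝ (Fin n)`, one has `Δ(Af) = A(Δf)` everywhere. -/
theorem laplacian_radialization_comm
    (n : ℕ) (hn : 1 ≤ n)
    (f : EuclideanSpace ℝ (Fin n) → ℝ) (hf : ContDiff ℝ (⊤ : ℕ∞) f) :
    ∀ x : EuclideanSpace ℝ (Fin n),
      laplacian (radialization f) x = radialization (laplacian f) x := by
  have : NeZero n := ⟨Nat.one_le_iff_ne_zero.mp hn⟩
  simp only [laplacian_eq_innerProductSpace_laplacian, radialization_eq_sphericalMean]
  exact congrFun (laplacian_radialization_comm_general (hf.of_le (by norm_cast)))
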